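/- For every real q ∈ (0, 1): (1/4) · θ₂(q)² θ₄(q)² (θ₄(q)⁴ − θ₂(q)⁴) = √q · ∑_{n=0}^∞ σ₃(2n+1) (−q)ⁿ. -/

import Mathlib

open Real

/-- Jacobi theta null value `θ₂(q) = ∑_{n∈ℤ} q^{(n+1/2)²}`. -/
noncomputable def theta2 (q : ℝ) : ℝ := ∑' n : ℤ, q ^ (((n : ℝ) + 1 / 2) ^ 2)

/-- Jacobi theta null value `θ₃(q) = ∑_{n∈ℤ} q^{n²}`. -/
noncomputable def theta3 (q : ℝ) : ℝ := ∑' n : ℤ, q ^ ((n : ℝ) ^ 2)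

/-- Jacobi theta null value `θ₄(q) = ∑_{n∈ℤ} (−1)ⁿ q^{n²}`. -/
noncomputable def theta4 (q : ℝ) : ℝ := ∑' n : ℤ, (-1 : ℝ) ^ n * q ^ ((n : ℝ) ^ 2)

/-- The modular lambda function `λ(q) = θ₂(q)⁴/θ₃(q)⁴`. -/
noncomputable def modLambda (q : ℝ) : ℝ := theta2 q ^ 4 / theta3 q ^ 4

/-- `z₄(q) = 4λ(q)(1−λ(q))`. -/
noncomputable def z4 (q : ℝ) : ℝ := 4 * modLambda q * (1 - modLambda q)

/-- `F₄(x,z) = ∑_{n=0}^∞ z^{n+x} · ((1/2+x)_n)³/((1+x)_n)³`. -/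
noncomputable def F4 (x z : ℝ) : ℝ :=
  ∑' n : ℕ, z ^ ((n : ℝ) + x) *
    ((ascPochhammer ℝ n).eval (1 / 2 + x)) ^ 3 / ((ascPochhammer ℝ n).eval (1 + x)) ^ 3

/-- The differential operator `f ↦ q·f′(q)`. -/
noncomputable def qDeriv (f : ℝ → ℝ) : ℝ → ℝ := fun q => q * deriv f q

/-- `σ₃(n)`, the sum of the cubes of the positive divisors of `n`. -/
def sigma3 (n : ℕ) : ℕ := ∑ d ∈ n.divisors, d ^ 3

open Real

noncomputable def tt (e : ℝ) (r : ℕ) (a q : ℝ) (n : ℤ) : ℝ :=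
  e ^ n * (2 * ((n : ℝ) + a)) ^ r * q ^ (((n : ℝ) + a) ^ 2)

noncomputable def TS (e : ℝ) (r : ℕ) (a q : ℝ) : ℝ := ∑' n : ℤ, tt e r a q n

lemma tt_summable_norm {e : ℝ} (he : |e| = 1) (r : ℕ) (a : ℝ) {q : ℝ} (h0 : 0 < q) (h1 : q < 1) :
    Summable fun n => ‖tt e r a q n‖ := by
  have hl : 0 < -Real.log q := by have := Real.log_neg h0 h1; linarith
  set T : ℝ := -Real.log q / π with hT
  have hTpos : 0 < T := by positivity
  have hTl : Real.log q = -π * T := by rw [hT]; field_simp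
  have hk := fun k => summable_pow_mul_jacobiTheta₂_term_bound (|a| * T) hTpos k
  have hb := (((hk r).add ((hk 0).mul_left (|a| ^ r))).mul_left (2 ^ r * 2 ^ (r - 1) * Real.exp (Real.log q * a ^ 2)))
  refine Summable.of_nonneg_of_le (fun n => norm_nonneg _) (fun n => ?_) hb
  unfold tt
  rw [norm_mul, norm_mul, norm_zpow, norm_pow, Real.norm_eq_abs, he, one_zpow, one_mul, norm_mul,
    Real.norm_of_nonneg (Real.rpow_nonneg h0.le _), mul_pow, Real.norm_eq_abs, Real.norm_eq_abs,
    abs_two, Real.rpow_def_of_pos h0]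
  have e1 : |(n : ℝ) + a| ^ r ≤ 2 ^ (r - 1) * (|(n : ℝ)| ^ r + |a| ^ r) :=
    (pow_le_pow_left₀ (abs_nonneg _) (abs_add_le _ _) r).trans (add_pow_le (abs_nonneg _) (abs_nonneg _) r)
  have e2 : Real.exp (Real.log q * ((n : ℝ) + a) ^ 2) ≤
      Real.exp (Real.log q * a ^ 2) * Real.exp (-π * (T * n ^ 2 - 2 * (|a| * T) * |(n : ℝ)|)) := by
    rw [← Real.exp_add, Real.exp_le_exp, hTl]
    have : -((n : ℝ) * a) ≤ |a| * |(n : ℝ)| := by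
      rw [← abs_mul, mul_comm a]; exact neg_le_abs _
    have h3 : 0 < π * T := by positivity
    nlinarith
  push_cast
  calc _ ≤ 2 ^ r * (2 ^ (r - 1) * (|(n : ℝ)| ^ r + |a| ^ r)) * (Real.exp (Real.log q * a ^ 2) * Real.exp (-π * (T * n ^ 2 - 2 * (|a| * T) * |(n : ℝ)|))) := by
        gcongr
    _ = _ := by ring

lemma tt_summable {e : ℝ} (he : |e| = 1) (r : ℕ) (a : ℝ) {q : ℝ} (h0 : 0 < q) (h1 : q < 1) :
    Summable (tt e r a q) := (tt_summable_norm he r a h0 h1).of_norm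

lemma tt_hasSum {e : ℝ} (he : |e| = 1) (r : ℕ) (a : ℝ) {q : ℝ} (h0 : 0 < q) (h1 : q < 1) :
    HasSum (tt e r a q) (TS e r a q) := (tt_summable he r a h0 h1).hasSum

lemma tt_prod {e e' : ℝ} (he : |e| = 1) (he' : |e'| = 1) (r r' : ℕ) (a a' : ℝ) {q : ℝ} (h0 : 0 < q) (h1 : q < 1) :
    HasSum (fun p : ℤ × ℤ => tt e r a q p.1 * tt e' r' a' q p.2) (TS e r a q * TS e' r' a' q) := by
  unfold TS
  rw [tsum_mul_tsum_of_summable_norm (tt_summable_norm he r a h0 h1) (tt_summable_norm he' r' a' h0 h1)]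
  exact (summable_mul_of_summable_norm (tt_summable_norm he r a h0 h1) (tt_summable_norm he' r' a' h0 h1)).hasSum

lemma split_sum {α β γ : Type*} {F : γ → ℝ} {A : ℝ} (hF : HasSum F A) (g₁ : α → γ) (g₂ : β → γ)
    (h₁ : Function.Injective g₁) (h₂ : Function.Injective g₂)
    (hc : IsCompl (Set.range g₁) (Set.range g₂)) :
    ∃ B C, HasSum (F ∘ g₁) B ∧ HasSum (F ∘ g₂) C ∧ A = B + C := by
  have s1 := (hF.summable.comp_injective h₁).hasSum
  have s2 := (hF.summable.comp_injective h₂).hasSum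
  refine ⟨_, _, s1, s2, hF.unique ?_⟩
  exact HasSum.add_isCompl hc (h₁.hasSum_range_iff.mpr s1) (h₂.hasSum_range_iff.mpr s2)

lemma lat_split {F : ℤ × ℤ → ℝ} {A : ℝ} (hF : HasSum F A) :
    ∃ B C, HasSum (fun p : ℤ × ℤ => F (p.1 + p.2, p.1 - p.2)) B ∧
      HasSum (fun p : ℤ × ℤ => F (p.1 + p.2 + 1, p.1 - p.2)) C ∧ A = B + C := by
  refine split_sum hF (fun p : ℤ × ℤ => (p.1 + p.2, p.1 - p.2))
    (fun p : ℤ × ℤ => (p.1 + p.2 + 1, p.1 - p.2)) ?_ ?_ ?_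
  · rintro ⟨a, b⟩ ⟨c, d⟩ h
    simp only [Prod.mk.injEq] at h ⊢
    omega
  · rintro ⟨a, b⟩ ⟨c, d⟩ h
    simp only [Prod.mk.injEq] at h ⊢
    omega
  · constructor
    · rw [Set.disjoint_left]
      rintro _ ⟨⟨a, b⟩, rfl⟩ ⟨⟨c, d⟩, h⟩
      simp only [Prod.mk.injEq] at h
      omega
    · rw [codisjoint_iff]
      refine Set.eq_univ_iff_forall.mpr ?_
      rintro ⟨k, l⟩
      rcases Int.even_or_odd' (k + l) with ⟨s, hs | hs⟩
      · left; exact ⟨(s, k - s), by simp only [Prod.mk.injEq]; omega⟩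
      · right; exact ⟨(s, k - 1 - s), by simp only [Prod.mk.injEq]; omega⟩

lemma lat_sym {F : ℤ × ℤ → ℝ} {A : ℝ} (hF : HasSum F A) (hs : ∀ k l, F (-1 - k, -l) = F (k, l)) :
    HasSum (fun p : ℤ × ℤ => F (p.1 + p.2, p.1 - p.2)) (A / 2) := by
  obtain ⟨B, C, hB, hC, rfl⟩ := lat_split hF
  have : C = B := by
    refine HasSum.unique ((Equiv.hasSum_iff ((Equiv.subLeft (-1 : ℤ)).prodCongr (Equiv.subLeft (-1 : ℤ)))).mpr hC) ?_
    convert hB using 2 with p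
    simp only [Function.comp, Equiv.prodCongr_apply, Prod.map, Equiv.subLeft_apply]
    rw [← hs]; congr 2 <;> ring
  subst this
  convert hB using 1; ring

lemma int_sym {F : ℤ → ℝ} {A : ℝ} (hF : HasSum F A) (hs : ∀ k, F (-1 - k) = F k) :
    HasSum (fun s : ℤ => F (2 * s)) (A / 2) := by
  obtain ⟨B, C, hB, hC, rfl⟩ := split_sum hF (fun s : ℤ => 2 * s) (fun s : ℤ => -1 - 2 * s)
    (by intro a b h; simp only at h; omega) (by intro a b h; simp only at h; omega) (by
      constructor
      · rw [Set.disjoint_left]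
        rintro _ ⟨a, rfl⟩ ⟨c, h⟩
        simp only at h
        omega
      · rw [codisjoint_iff]
        refine Set.eq_univ_iff_forall.mpr ?_
        intro k
        rcases Int.even_or_odd' k with ⟨s, hs | hs⟩
        · left; exact ⟨s, hs.symm⟩
        · right; exact ⟨-1 - s, by simp only; omega⟩)
  have : C = B := by
    refine hC.unique ?_
    have : (F ∘ fun s : ℤ => -1 - 2 * s) = F ∘ fun s : ℤ => 2 * s := by
      funext s; exact hs _
    rw [this]; exact hB
  subst this
  have hB' : HasSum (fun s : ℤ => F (2 * s)) C := hB
  convert hB' using 1; ring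

lemma hs_congr {ι : Type*} {f g : ι → ℝ} {a : ℝ} (h : HasSum g a) (hfg : ∀ b, f b = g b) : HasSum f a := by
  rwa [show f = g from funext hfg]

open Real

lemma ss_inv {e : ℝ} (he : e = 1 ∨ e = -1) : e⁻¹ = e := by rcases he with rfl | rfl <;> norm_num
lemma ss_abs {e : ℝ} (he : e = 1 ∨ e = -1) : |e| = 1 := by rcases he with rfl | rfl <;> norm_num
lemma ss_ne {e : ℝ} (he : e = 1 ∨ e = -1) : e ≠ 0 := by rcases he with rfl | rfl <;> norm_num
lemma ss_neg {e : ℝ} (he : e = 1 ∨ e = -1) (n : ℤ) : e ^ (-n) = e ^ n := by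
  rw [zpow_neg, ← inv_zpow, ss_inv he]
lemma ss_sub {e : ℝ} (he : e = 1 ∨ e = -1) (m n : ℤ) : e ^ (m - n) = e ^ m * e ^ n := by
  rw [sub_eq_add_neg, zpow_add₀ (ss_ne he), ss_neg he]

lemma tt_half_neg {e : ℝ} (he : e = 1 ∨ e = -1) (r : ℕ) (q : ℝ) (k : ℤ) :
    tt e r (1/2) q (-1 - k) = e * (-1) ^ r * tt e r (1/2) q k := by
  unfold tt
  rw [ss_sub he, ss_neg he, zpow_one]
  have h1 : (((-1 - k : ℤ) : ℝ) + 1/2) = -((k : ℝ) + 1/2) := by push_cast; ring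
  rw [h1, neg_sq, mul_neg, neg_pow]; ring

lemma tt_zero_neg {e : ℝ} (he : e = 1 ∨ e = -1) (r : ℕ) (q : ℝ) (k : ℤ) :
    tt e r 0 q (-k) = (-1) ^ r * tt e r 0 q k := by
  unfold tt
  rw [ss_neg he]
  have h1 : (((-k : ℤ) : ℝ) + 0) = -((k : ℝ) + 0) := by push_cast; ring
  rw [h1, neg_sq, mul_neg, neg_pow]; ring

lemma tt_pt {e e' : ℝ} (he : e = 1 ∨ e = -1) (he' : e' = 1 ∨ e' = -1) (r r' : ℕ) {q : ℝ} (h0 : 0 < q) (s t : ℤ) :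
    tt e r (1/2) q (s + t) * tt e' r' 0 q (s - t) =
     (2 * ((s : ℝ) + 1/4) + 2 * ((t : ℝ) + 1/4)) ^ r * (2 * ((s : ℝ) + 1/4) - 2 * ((t : ℝ) + 1/4)) ^ r' *
       (tt (e * e') 0 (1/4) (q ^ 2) s * tt (e * e') 0 (1/4) (q ^ 2) t) := by
  unfold tt
  rw [ss_sub he', zpow_add₀ (ss_ne he), mul_zpow, mul_zpow]
  have h1 : q ^ ((((s + t : ℤ) : ℝ) + 1/2) ^ 2) * q ^ ((((s - t : ℤ) : ℝ) + 0) ^ 2) =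
     (q ^ 2) ^ (((s : ℝ) + 1/4) ^ 2) * (q ^ 2) ^ (((t : ℝ) + 1/4) ^ 2) := by
    rw [← Real.rpow_natCast q 2, ← Real.rpow_mul h0.le, ← Real.rpow_mul h0.le, ← Real.rpow_add h0, ← Real.rpow_add h0]
    congr 1; push_cast; ring
  have h2 : (2 * (((s + t : ℤ) : ℝ) + 1/2)) = (2 * ((s : ℝ) + 1/4) + 2 * ((t : ℝ) + 1/4)) := by push_cast; ring
  have h3 : (2 * (((s - t : ℤ) : ℝ) + 0)) = (2 * ((s : ℝ) + 1/4) - 2 * ((t : ℝ) + 1/4)) := by push_cast; ring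
  rw [h2, h3]
  linear_combination (e ^ s * e ^ t * (e' ^ s * e' ^ t) * (2 * ((s : ℝ) + 1/4) + 2 * ((t : ℝ) + 1/4)) ^ r * (2 * ((s : ℝ) + 1/4) - 2 * ((t : ℝ) + 1/4)) ^ r') * h1

lemma tt_pow (e : ℝ) (r : ℕ) (a q : ℝ) (n : ℤ) : tt e r a q n = (2 * ((n : ℝ) + a)) ^ r * tt e 0 a q n := by
  unfold tt; ring

lemma h11 : (1:ℝ) = 1 ∨ (1:ℝ) = -1 := Or.inl rfl
lemma hm1 : (-1:ℝ) = 1 ∨ (-1:ℝ) = -1 := Or.inr rfl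

lemma sq_lt {q : ℝ} (h0 : 0 < q) (h1 : q < 1) : q ^ 2 < 1 := by nlinarith

section
variable {q : ℝ} (h0 : 0 < q) (h1 : q < 1)

lemma i1 (h0 : 0 < q) (h1 : q < 1) {e e' : ℝ} (he : e = 1 ∨ e = -1) (he' : e' = 1 ∨ e' = -1) (hs : e = 1) :
    TS e 0 (1/2) q * TS e' 0 0 q = 2 * TS (e * e') 0 (1/4) (q ^ 2) ^ 2 := by
  have h := lat_sym (tt_prod (ss_abs he) (ss_abs he') 0 0 (1/2) 0 h0 h1) (by
    intro k l; simp only [tt_half_neg he, tt_zero_neg he']; subst hs; ring)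
  have hE : (e * e') = 1 ∨ (e * e') = -1 := by subst hs; simpa using he'
  have h' := tt_prod (ss_abs hE) (ss_abs hE) 0 0 (1/4) (1/4) (pow_pos h0 2) (sq_lt h0 h1)
  have := h.unique (by
    refine hs_congr (h') (fun p => ?_)
    simp only [tt_pt he he' _ _ h0]; ring)
  linarith

/-- A * theta = 4 x1 x0 -/
lemma i2 (h0 : 0 < q) (h1 : q < 1) {e' : ℝ} (he' : e' = 1 ∨ e' = -1) :
    TS (-1) 1 (1/2) q * TS e' 0 0 q = 4 * (TS (-1 * e') 1 (1/4) (q ^ 2) * TS (-1 * e') 0 (1/4) (q ^ 2)) := by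
  have h := lat_sym (tt_prod (ss_abs hm1) (ss_abs he') 1 0 (1/2) 0 h0 h1) (by
    intro k l; simp only [tt_half_neg hm1, tt_zero_neg he']; ring)
  have hE : (-1 * e') = 1 ∨ (-1 * e') = -1 := by rcases he' with rfl | rfl <;> norm_num
  have a1 := tt_prod (ss_abs hE) (ss_abs hE) 1 0 (1/4) (1/4) (pow_pos h0 2) (sq_lt h0 h1)
  have a2 := tt_prod (ss_abs hE) (ss_abs hE) 0 1 (1/4) (1/4) (pow_pos h0 2) (sq_lt h0 h1)
  have := h.unique (by
    refine hs_congr (a1.add a2) (fun p => ?_)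
    simp only [tt_pt hm1 he' _ _ h0]; simp only [tt_pow _ 1]; ring)
  linarith

/-- P2 * theta - theta2 * P -/
lemma i3 (h0 : 0 < q) (h1 : q < 1) {e' : ℝ} (he' : e' = 1 ∨ e' = -1) :
    TS 1 2 (1/2) q * TS e' 0 0 q - TS 1 0 (1/2) q * TS e' 2 0 q = 8 * TS e' 1 (1/4) (q ^ 2) ^ 2 := by
  have h := lat_sym ((tt_prod (ss_abs h11) (ss_abs he') 2 0 (1/2) 0 h0 h1).sub
      (tt_prod (ss_abs h11) (ss_abs he') 0 2 (1/2) 0 h0 h1)) (by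
    intro k l; simp only [tt_half_neg h11, tt_zero_neg he']; ring)
  have a1 := tt_prod (ss_abs he') (ss_abs he') 1 1 (1/4) (1/4) (pow_pos h0 2) (sq_lt h0 h1)
  have := h.unique (by
    refine hs_congr (a1.mul_left 4) (fun p => ?_)
    simp only [tt_pt h11 he' _ _ h0]; simp only [tt_pow _ 1, one_mul]; ring)
  linarith

lemma i7 (h0 : 0 < q) (h1 : q < 1) {e' : ℝ} (he' : e' = 1 ∨ e' = -1) :
    TS 1 2 (1/2) q * TS e' 0 0 q + TS 1 0 (1/2) q * TS e' 2 0 q =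
      8 * (TS e' 2 (1/4) (q ^ 2) * TS e' 0 (1/4) (q ^ 2)) := by
  have h := lat_sym ((tt_prod (ss_abs h11) (ss_abs he') 2 0 (1/2) 0 h0 h1).add
      (tt_prod (ss_abs h11) (ss_abs he') 0 2 (1/2) 0 h0 h1)) (by
    intro k l; simp only [tt_half_neg h11, tt_zero_neg he']; ring)
  have a1 := tt_prod (ss_abs he') (ss_abs he') 2 0 (1/4) (1/4) (pow_pos h0 2) (sq_lt h0 h1)
  have a2 := tt_prod (ss_abs he') (ss_abs he') 0 2 (1/4) (1/4) (pow_pos h0 2) (sq_lt h0 h1)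
  have := h.unique (by
    refine hs_congr ((a1.add a2).mul_left 2) (fun p => ?_)
    simp only [tt_pt h11 he' _ _ h0]; simp only [tt_pow _ 2, one_mul]; ring)
  linarith

lemma i6 (h0 : 0 < q) (h1 : q < 1) :
    TS (-1) 3 (1/2) q * TS 1 0 0 q - TS (-1) 1 (1/2) q * TS 1 2 0 q =
      16 * (TS (-1) 1 (1/4) (q ^ 2) * TS (-1) 2 (1/4) (q ^ 2)) := by
  have h := lat_sym ((tt_prod (ss_abs hm1) (ss_abs h11) 3 0 (1/2) 0 h0 h1).sub
      (tt_prod (ss_abs hm1) (ss_abs h11) 1 2 (1/2) 0 h0 h1)) (by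
    intro k l; simp only [tt_half_neg hm1, tt_zero_neg h11]; ring)
  have a1 := tt_prod (ss_abs hm1) (ss_abs hm1) 2 1 (1/4) (1/4) (pow_pos h0 2) (sq_lt h0 h1)
  have a2 := tt_prod (ss_abs hm1) (ss_abs hm1) 1 2 (1/4) (1/4) (pow_pos h0 2) (sq_lt h0 h1)
  have := h.unique (by
    refine hs_congr ((a1.add a2).mul_left 4) (fun p => ?_)
    simp only [tt_pt hm1 h11 _ _ h0]; simp only [tt_pow _ 2, tt_pow _ 1, mul_one]; ring)
  linarith

lemma tt_dbl {e : ℝ} (he : e = 1 ∨ e = -1) (r : ℕ) (h0 : 0 < q) (h1 : q < 1) (hs : e * (-1) ^ r = 1) :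
    TS e r (1/2) q = 2 * 2 ^ r * TS 1 r (1/4) (q ^ 4) := by
  have h := int_sym (tt_hasSum (ss_abs he) r (1/2) h0 h1) (by
    intro k; rw [tt_half_neg he, hs, one_mul])
  have h4 : q ^ 4 < 1 := pow_lt_one₀ h0.le h1 (by norm_num)
  have a1 := (tt_hasSum (ss_abs h11) r (1/4) (pow_pos h0 4) h4).mul_left (2 ^ r)
  have := h.unique (by
    refine hs_congr (a1) (fun s => ?_)
    unfold tt
    have e1 : e ^ (2 * s) = 1 := by rw [zpow_mul]; rcases he with rfl | rfl <;> norm_num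
    have e2 : q ^ ((((2 * s : ℤ) : ℝ) + 1/2) ^ 2) = (q ^ 4) ^ (((s : ℝ) + 1/4) ^ 2) := by
      rw [← Real.rpow_natCast q 4, ← Real.rpow_mul h0.le]
      congr 1; push_cast; ring
    rw [e1, e2, one_zpow, one_mul, one_mul, ← mul_assoc, ← mul_pow]
    congr 2; push_cast; ring)
  linarith

lemma i8 (h0 : 0 < q) (h1 : q < 1) : TS 1 0 0 q * TS (-1) 0 0 q = TS (-1) 0 0 (q ^ 2) ^ 2 := by
  obtain ⟨B, C, hB, hC, hA⟩ := lat_split (tt_prod (ss_abs h11) (ss_abs hm1) 0 0 0 0 h0 h1)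
  have hC0 : C = 0 := by
    have h2 := (Equiv.hasSum_iff ((Equiv.refl ℤ).prodCongr (Equiv.subLeft (-1 : ℤ)))).mpr hC
    have : C = -C := by
      refine h2.unique ?_
      refine hs_congr (hC.neg) (fun p => ?_)
      simp only [Function.comp, Equiv.prodCongr_apply, Prod.map, Equiv.subLeft_apply, Equiv.refl_apply]
      unfold tt
      have e1 : (-1 : ℝ) ^ (p.1 - (-1 - p.2)) = - (-1) ^ (p.1 - p.2) := by
        rw [ss_sub hm1, ss_sub hm1, ss_sub hm1, ss_neg hm1, zpow_one]; ring
      rw [e1, one_zpow, one_zpow]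
      have e3 : (p.1 + (-1 - p.2) + 1) = p.1 - p.2 := by ring
      have e4 : (p.1 - (-1 - p.2)) = p.1 + p.2 + 1 := by ring
      rw [e3, e4]; ring
    linarith
  have a1 := tt_prod (ss_abs hm1) (ss_abs hm1) 0 0 0 0 (pow_pos h0 2) (sq_lt h0 h1)
  have := hB.unique (by
    refine hs_congr (a1) (fun p => ?_)
    unfold tt
    have h1 : q ^ ((((p.1 + p.2 : ℤ) : ℝ) + 0) ^ 2) * q ^ ((((p.1 - p.2 : ℤ) : ℝ) + 0) ^ 2) =
      (q ^ 2) ^ (((p.1 : ℝ) + 0) ^ 2) * (q ^ 2) ^ (((p.2 : ℝ) + 0) ^ 2) := by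
      rw [← Real.rpow_natCast q 2, ← Real.rpow_mul h0.le, ← Real.rpow_mul h0.le, ← Real.rpow_add h0, ← Real.rpow_add h0]
      congr 1; push_cast; ring
    rw [ss_sub hm1, one_zpow]
    linear_combination ((-1) ^ p.1 * (-1) ^ p.2) * h1)
  rw [hA, hC0, this]; ring

lemma i9 (h0 : 0 < q) (h1 : q < 1) : TS (-1) 2 0 q * TS 1 0 0 q - TS (-1) 0 0 q * TS 1 2 0 q =
    -4 * TS (-1) 1 (1/2) (q ^ 2) ^ 2 := by
  obtain ⟨B, C, hB, hC, hA⟩ := lat_split ((tt_prod (ss_abs hm1) (ss_abs h11) 2 0 0 0 h0 h1).sub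
    (tt_prod (ss_abs hm1) (ss_abs h11) 0 2 0 0 h0 h1))
  have hB0 : B = 0 := by
    have h2 := (Equiv.hasSum_iff ((Equiv.refl ℤ).prodCongr (Equiv.neg ℤ))).mpr hB
    have : B = -B := by
      refine h2.unique ?_
      refine hs_congr (hB.neg) (fun p => ?_)
      simp only [Function.comp, Equiv.prodCongr_apply, Prod.map, Equiv.neg_apply, Equiv.refl_apply]
      unfold tt
      rw [sub_neg_eq_add, ← sub_eq_add_neg]
      simp only [one_zpow, ss_sub hm1, zpow_add₀ (show (-1 : ℝ) ≠ 0 by norm_num)]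
      ring
    linarith
  have a1 := (tt_prod (ss_abs hm1) (ss_abs hm1) 1 1 (1/2) (1/2) (pow_pos h0 2) (sq_lt h0 h1)).mul_left (-4)
  have := hC.unique (by
    refine hs_congr (a1) (fun p => ?_)
    unfold tt
    have h1 : q ^ ((((p.1 + p.2 + 1 : ℤ) : ℝ) + 0) ^ 2) * q ^ ((((p.1 - p.2 : ℤ) : ℝ) + 0) ^ 2) =
      (q ^ 2) ^ (((p.1 : ℝ) + 1/2) ^ 2) * (q ^ 2) ^ (((p.2 : ℝ) + 1/2) ^ 2) := by
      rw [← Real.rpow_natCast q 2, ← Real.rpow_mul h0.le, ← Real.rpow_mul h0.le, ← Real.rpow_add h0, ← Real.rpow_add h0]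
      congr 1; push_cast; ring
    rw [zpow_add₀ (by norm_num), zpow_add₀ (by norm_num), one_zpow, zpow_one]
    have h2 : (((p.1 + p.2 + 1 : ℤ) : ℝ) + 0) ^ 2 - (((p.1 - p.2 : ℤ) : ℝ) + 0) ^ 2 = 4 * (((p.1 : ℝ) + 1/2) * ((p.2 : ℝ) + 1/2)) := by
      push_cast; ring
    set X := (((p.1 + p.2 + 1 : ℤ) : ℝ) + 0)
    set Y := (((p.1 - p.2 : ℤ) : ℝ) + 0)
    linear_combination (-4 * ((-1) ^ p.1 * (-1) ^ p.2) * (X ^ 2 - Y ^ 2)) * h1 - 4 * ((-1) ^ p.1 * (-1) ^ p.2) * ((q ^ 2) ^ (((p.1 : ℝ) + 1/2) ^ 2) * (q ^ 2) ^ (((p.2 : ℝ) + 1/2) ^ 2)) * h2)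
  rw [hA, hB0, this]; ring
end

open Real Filter Topology

lemma TS_lim {e : ℝ} (he : e = 1 ∨ e = -1) (r : ℕ) {a : ℝ} (ha : |a| < 1/2) :
    Tendsto (fun x => TS e r a x / x ^ (a ^ 2)) (𝓝[>] 0) (𝓝 ((2 * a) ^ r)) := by
  have key := tendsto_tsum_of_dominated_convergence (𝓕 := 𝓝[>] (0:ℝ))
    (f := fun x (n : ℤ) => tt e r a x n / x ^ (a ^ 2))
    (g := fun n : ℤ => if n = 0 then (2 * a) ^ r else 0)
    (bound := fun n => ‖tt e r a (1/2) n‖ / (1/2) ^ (a ^ 2))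
    ((tt_summable_norm (ss_abs he) r a (by norm_num) (by norm_num)).div_const _) ?_ ?_
  · rw [tsum_ite_eq] at key
    refine key.congr (fun x => ?_)
    rw [tsum_div_const]; rfl
  · intro n
    have hx : ∀ᶠ x in 𝓝[>] (0:ℝ), tt e r a x n / x ^ (a ^ 2) =
        e ^ n * (2 * ((n : ℝ) + a)) ^ r * x ^ ((n : ℝ) ^ 2 + 2 * n * a) := by
      filter_upwards [self_mem_nhdsWithin] with x hx
      have hx : 0 < x := hx
      unfold tt
      rw [mul_div_assoc, ← Real.rpow_sub hx]
      congr 2; ring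
    refine Tendsto.congr' (EventuallyEq.symm hx) ?_
    split_ifs with h
    · subst h; simp
    · have hpos : 0 < (n : ℝ) ^ 2 + 2 * n * a := by
        have h1 : (1 : ℝ) ≤ |(n : ℝ)| := by exact_mod_cast Int.one_le_abs h
        have h2 : -((n : ℝ) * a) ≤ |(n : ℝ)| * |a| := by rw [← abs_mul]; exact neg_le_abs _
        have h3 : (n : ℝ) ^ 2 = |(n : ℝ)| * |(n : ℝ)| := by rw [← sq, sq_abs]
        nlinarith
      have : Tendsto (fun x : ℝ => x ^ ((n : ℝ) ^ 2 + 2 * n * a)) (𝓝[>] 0) (𝓝 0) := by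
        have := (Real.continuousAt_rpow_const 0 ((n : ℝ) ^ 2 + 2 * n * a) (Or.inr hpos.le)).tendsto
        rw [Real.zero_rpow hpos.ne'] at this
        exact this.mono_left nhdsWithin_le_nhds
      simpa using this.const_mul (e ^ n * (2 * ((n : ℝ) + a)) ^ r)
  · filter_upwards [Ioo_mem_nhdsGT (show (0:ℝ) < 1/2 by norm_num)] with x hx n
    have hx0 : 0 < x := hx.1
    have hexp : 0 ≤ (n : ℝ) ^ 2 + 2 * n * a := by
      by_cases h : n = 0
      · subst h; simp
      · have h1 : (1 : ℝ) ≤ |(n : ℝ)| := by exact_mod_cast Int.one_le_abs h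
        have h2 : -((n : ℝ) * a) ≤ |(n : ℝ)| * |a| := by rw [← abs_mul]; exact neg_le_abs _
        have h3 : (n : ℝ) ^ 2 = |(n : ℝ)| * |(n : ℝ)| := by rw [← sq, sq_abs]
        nlinarith
    have g : ∀ y : ℝ, 0 < y → ‖tt e r a y n‖ / y ^ (a ^ 2) = ‖e ^ n * (2 * ((n : ℝ) + a)) ^ r‖ * y ^ ((n : ℝ) ^ 2 + 2 * n * a) := by
      intro y hy
      unfold tt
      rw [norm_mul, Real.norm_of_nonneg (Real.rpow_nonneg hy.le _), mul_div_assoc, ← Real.rpow_sub hy]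
      congr 2; ring
    rw [norm_div, Real.norm_of_nonneg (Real.rpow_nonneg hx0.le _), g x hx0, g _ (by norm_num)]
    gcongr
    exact hx.2.le

lemma seq_lim {q : ℝ} (h0 : 0 < q) (h1 : q < 1) : Tendsto (fun n : ℕ => q ^ (2 ^ n)) atTop (𝓝[>] 0) := by
  rw [tendsto_nhdsWithin_iff]
  constructor
  · exact (tendsto_pow_atTop_nhds_zero_of_lt_one h0.le h1).comp (tendsto_pow_atTop_atTop_of_one_lt (by norm_num))
  · exact Eventually.of_forall fun n => pow_pos h0 _

lemma seq_rec (q : ℝ) (n : ℕ) : q ^ (2 ^ (n + 1)) = (q ^ (2 ^ n)) ^ 2 := by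
  rw [← pow_mul, pow_succ]

lemma seq_lt {q : ℝ} (h0 : 0 < q) (h1 : q < 1) (n : ℕ) : q ^ (2 ^ n) < 1 :=
  pow_lt_one₀ h0.le h1 (by positivity)

lemma th4_ne {q : ℝ} (h0 : 0 < q) (h1 : q < 1) : TS (-1) 0 0 q ≠ 0 := by
  intro hz
  have hall : ∀ n : ℕ, TS (-1) 0 0 (q ^ (2 ^ n)) = 0 := by
    intro n
    induction n with
    | zero => simpa using hz
    | succ n ih =>
      have := i8 (pow_pos h0 (2 ^ n)) (seq_lt h0 h1 n)
      rw [ih, mul_zero] at this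
      rw [seq_rec]
      exact pow_eq_zero_iff (two_ne_zero) |>.mp this.symm
  have := (TS_lim hm1 0 (a := 0) (by norm_num)).comp (seq_lim h0 h1)
  have h2 : Tendsto (fun _ : ℕ => (0:ℝ)) atTop (𝓝 ((2 * 0) ^ 0)) := by
    refine this.congr (fun n => ?_)
    simp only [Function.comp, hall, zero_div]
  have := tendsto_nhds_unique h2 tendsto_const_nhds
  norm_num at this

lemma TS_pos {q : ℝ} (h0 : 0 < q) (h1 : q < 1) (a : ℝ) : 0 < TS 1 0 a q := by
  refine (tt_summable (by norm_num) 0 a h0 h1).tsum_pos (fun n => ?_) 0 ?_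
  · unfold tt; simp; positivity
  · unfold tt; simp; positivity

lemma jacobi {q : ℝ} (h0 : 0 < q) (h1 : q < 1) :
    TS (-1) 1 (1/2) q = TS 1 0 (1/2) q * TS 1 0 0 q * TS (-1) 0 0 q := by
  set R : ℝ → ℝ := fun q => TS (-1) 1 (1/2) q / (TS 1 0 (1/2) q * TS 1 0 0 q * TS (-1) 0 0 q) with hR
  have hrec : ∀ q : ℝ, 0 < q → q < 1 → R (q ^ 2) = R q := by
    intro q h0 h1
    have p2 : 0 < q ^ 2 := pow_pos h0 2
    have l2 := sq_lt h0 h1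
    have a1 := i1 p2 l2 h11 h11 rfl
    have a2 := i2 p2 l2 hm1
    have d1 := tt_dbl h11 0 h0 h1 (by norm_num)
    have d2 := tt_dbl hm1 1 h0 h1 (by norm_num)
    have a8 := i8 h0 h1
    rw [← pow_mul] at a1 a2
    norm_num at a1 a2 d1 d2
    have n2 := TS_pos h0 h1 (1/2)
    have n3 := TS_pos h0 h1 0
    have n4 := th4_ne h0 h1
    have m2 := TS_pos p2 l2 (1/2)
    have m3 := TS_pos p2 l2 0
    have m4 := th4_ne p2 l2
    simp only [hR]
    norm_num at n2 m2 ⊢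
    rw [div_eq_div_iff (by positivity) (by positivity)]
    apply mul_right_cancel₀ m4
    rw [d1, d2]
    linear_combination (2 * TS 1 0 (1 / 4) (q ^ 4) * TS 1 0 0 q * TS (-1) 0 0 q) * a2 - (4 * TS 1 1 (1 / 4) (q ^ 4) * TS (-1) 0 0 (q ^ 2) ^ 2) * a1 + (8 * TS 1 1 (1 / 4) (q ^ 4) * TS 1 0 (1 / 4) (q ^ 4) ^ 2) * a8
  have hall : ∀ n : ℕ, R (q ^ (2 ^ n)) = R q := by
    intro n
    induction n with
    | zero => simp
    | succ n ih => rw [seq_rec, hrec _ (pow_pos h0 _) (seq_lt h0 h1 n), ih]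
  have lim : Tendsto R (𝓝[>] 0) (𝓝 1) := by
    have l1 := TS_lim h11 1 (a := 1/4) (by norm_num [abs_of_pos])
    have l0 := TS_lim h11 0 (a := 1/4) (by norm_num [abs_of_pos])
    have l3 := TS_lim h11 0 (a := 0) (by norm_num)
    have l4 := TS_lim hm1 0 (a := 0) (by norm_num)
    have h4 : Tendsto (fun x : ℝ => x ^ 4) (𝓝[>] 0) (𝓝[>] 0) := by
      rw [tendsto_nhdsWithin_iff]
      constructor
      · have := (continuous_pow 4 (M := ℝ)).tendsto 0
        norm_num at this
        exact this.mono_left nhdsWithin_le_nhds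
      · filter_upwards [self_mem_nhdsWithin] with x hx
        exact pow_pos (show (0:ℝ) < x from hx) 4
    have := ((l1.comp h4).const_mul 4).div ((((l0.comp h4).const_mul 2).mul l3).mul l4) (by norm_num)
    norm_num at this
    refine this.congr' ?_
    filter_upwards [Ioo_mem_nhdsGT (show (0:ℝ) < 1 by norm_num)] with x hx
    have d1 := tt_dbl h11 0 hx.1 hx.2 (by norm_num)
    have d2 := tt_dbl hm1 1 hx.1 hx.2 (by norm_num)
    have : 0 < (x ^ 4) ^ ((1:ℝ) / 16) := Real.rpow_pos_of_pos (pow_pos hx.1 4) _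
    simp only [hR, d1, d2]
    norm_num
    field_simp
  have := tendsto_nhds_unique (lim.comp (seq_lim h0 h1)) (tendsto_const_nhds.congr (fun n => (hall n).symm))
  have hne : TS 1 0 (1/2) q * TS 1 0 0 q * TS (-1) 0 0 q ≠ 0 :=
    mul_ne_zero (mul_ne_zero (TS_pos h0 h1 _).ne' (TS_pos h0 h1 _).ne') (th4_ne h0 h1)
  exact (div_eq_one_iff_eq hne).mp this.symm

open Real

/-- The logarithmic derivative identity. -/
lemma logder {q : ℝ} (h0 : 0 < q) (h1 : q < 1) :
    TS (-1) 3 (1/2) q * TS 1 0 0 q - 3 * TS 1 2 0 q * TS (-1) 1 (1/2) q =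
      TS (-1) 1 (1/2) q * TS 1 0 0 q * (TS (-1) 0 0 q ^ 4 - TS 1 0 (1/2) q ^ 4) := by
  have p2 : 0 < q ^ 2 := pow_pos h0 2
  have l2 := sq_lt h0 h1
  have n2 := (TS_pos h0 h1 (1/2)).ne'
  have n3 := (TS_pos h0 h1 0).ne'
  have n4 := th4_ne h0 h1
  have J := jacobi h0 h1
  have J2 := jacobi p2 l2
  have b1 := i1 h0 h1 h11 h11 rfl
  have b2 := i2 h0 h1 hm1
  have b3 := i3 h0 h1 h11
  have b4 := i2 h0 h1 h11
  have b5 := i1 h0 h1 h11 hm1 rfl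
  have b6 := i6 h0 h1
  have b7 := i7 h0 h1 hm1
  have b8 := i8 h0 h1
  have b9 := i9 h0 h1
  have c1 := i1 p2 l2 h11 h11 rfl
  have d1 := tt_dbl h11 0 h0 h1 (by norm_num)
  have p4 : (q ^ 2) ^ 2 = q ^ 4 := by ring
  rw [p4] at c1
  simp only [mul_one, one_mul, mul_neg, neg_mul, neg_neg, pow_zero] at b1 b2 b3 b4 b5 b6 b7 b8 b9 c1 d1
  generalize TS (-1) 3 (1/2) q = A3 at *
  generalize TS (-1) 1 (1/2) q = A at *
  generalize TS 1 2 (1/2) q = P2 at *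
  generalize TS 1 2 0 q = P3 at *
  generalize TS (-1) 2 0 q = P4 at *
  generalize TS 1 0 (1/2) q = x2 at *
  generalize TS 1 0 0 q = x3 at *
  generalize TS (-1) 0 0 q = x4 at *
  generalize TS (-1) 1 (1/2) (q ^ 2) = A' at *
  generalize TS 1 0 (1/2) (q ^ 2) = y2 at *
  generalize TS 1 0 0 (q ^ 2) = y3 at *
  generalize TS (-1) 0 0 (q ^ 2) = y4 at *
  generalize TS 1 0 (1/4) (q ^ 4) = k at *
  generalize TS 1 0 (1/4) (q ^ 2) = H0 at *
  generalize TS 1 1 (1/4) (q ^ 2) = H1 at *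
  generalize TS (-1) 0 (1/4) (q ^ 2) = f0 at *
  generalize TS (-1) 1 (1/4) (q ^ 2) = f1 at *
  generalize TS (-1) 2 (1/4) (q ^ 2) = f2 at *
  have hH0 : H0 ≠ 0 := by rintro rfl; apply mul_ne_zero n2 n3; rw [b1]; ring
  have hf0 : f0 ≠ 0 := by rintro rfl; apply mul_ne_zero n2 n4; rw [b5]; ring
  -- e1: P2 x3 - x2 P3 = x2 x3 x4^4
  have e1 : P2 * x3 - x2 * P3 = x2 * x3 * x4 ^ 4 := by
    apply mul_right_cancel₀ (pow_ne_zero 2 hH0)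
    have t : 16 * (H1 * H0) ^ 2 = (x2 * x3 * x4 * x4) ^ 2 := by rw [← J, b2]; ring
    linear_combination H0 ^ 2 * b3 + (1/2) * t + (1/2) * x2 * x3 * x4 ^ 4 * b1
  have e2 : P4 * x3 - x4 * P3 = - (x3 * x4 * x2 ^ 4) := by
    rw [b9, J2]
    have t1 : y2 * y3 = x2 ^ 2 / 2 := by rw [c1, d1]; ring
    rw [t1, mul_pow, ← b8]; ring
  have e3 : (A3 * x3 - A * P3) * (x2 * x4) = (A * x3) * (P2 * x4 + x2 * P4) := by
    rw [b6, b5, b7, b4]; ring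
  have hh : x2 * x4 ≠ 0 := mul_ne_zero n2 n4
  apply mul_right_cancel₀ hh
  linear_combination e3 + A * x4 * e1 + A * x2 * e2

open Real Filter Topology

noncomputable def hh (q : ℝ) (j : ℤ) : ℝ := (1 + q ^ (2 * (j : ℝ) + 1))⁻¹
noncomputable def gg (q : ℝ) (j : ℤ) : ℝ := q ^ ((j : ℝ) + 1/2) * hh q j
noncomputable def gw (r : ℕ) (q : ℝ) (j : ℤ) : ℝ := (-1) ^ j * (2 * ((j : ℝ) + 1/2)) ^ r * gg q j

section
variable {q : ℝ}

lemma hh_pos (h0 : 0 < q) (j : ℤ) : 0 < hh q j := by unfold hh; positivity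
lemma hh_le (h0 : 0 < q) (j : ℤ) : hh q j ≤ 1 := by
  unfold hh
  apply inv_le_one_of_one_le₀
  have : 0 < q ^ (2 * (j : ℝ) + 1) := Real.rpow_pos_of_pos h0 _
  linarith
lemma hh_mul (h0 : 0 < q) (j : ℤ) : hh q j * (1 + q ^ (2 * (j : ℝ) + 1)) = 1 := by
  unfold hh
  have : 0 < q ^ (2 * (j : ℝ) + 1) := Real.rpow_pos_of_pos h0 _
  field_simp
lemma gg_neg (h0 : 0 < q) (j : ℤ) : gg q (-1 - j) = gg q j := by
  unfold gg hh
  have e1 : q ^ ((j : ℝ) + 1/2) = (q ^ (((-1 - j : ℤ) : ℝ) + 1/2))⁻¹ := by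
    rw [← Real.rpow_neg h0.le]; congr 1; push_cast; ring
  have e2 : q ^ (2 * (j : ℝ) + 1) = (q ^ (((-1 - j : ℤ) : ℝ) + 1/2))⁻¹ ^ 2 := by
    rw [← Real.rpow_neg h0.le, ← Real.rpow_natCast, ← Real.rpow_mul h0.le]; congr 1; push_cast; ring
  have e3 : q ^ (2 * ((-1 - j : ℤ) : ℝ) + 1) = (q ^ (((-1 - j : ℤ) : ℝ) + 1/2)) ^ 2 := by
    rw [← Real.rpow_natCast, ← Real.rpow_mul h0.le]; congr 1; push_cast; ring
  rw [e1, e2, e3]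
  have : 0 < q ^ (((-1 - j : ℤ) : ℝ) + 1/2) := Real.rpow_pos_of_pos h0 _
  field_simp
  ring

lemma gw_neg (h0 : 0 < q) (r : ℕ) (j : ℤ) : gw r q (-1 - j) = -(-1) ^ r * gw r q j := by
  unfold gw
  rw [gg_neg h0, ss_sub hm1, ss_neg hm1, zpow_one]
  have h1 : (((-1 - j : ℤ) : ℝ) + 1/2) = -((j : ℝ) + 1/2) := by push_cast; ring
  rw [h1, mul_neg, neg_pow]; ring

lemma gg_pos (h0 : 0 < q) (j : ℤ) : 0 < gg q j := mul_pos (Real.rpow_pos_of_pos h0 _) (hh_pos h0 j)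

lemma gg_le_nat (h0 : 0 < q) (h1 : q < 1) (j : ℕ) : gg q j ≤ q ^ j := by
  unfold gg
  calc _ ≤ q ^ (((j : ℤ) : ℝ) + 1/2) * 1 := by gcongr; exact hh_le h0 _
    _ ≤ q ^ ((j : ℝ)) := by
      rw [mul_one]; apply Real.rpow_le_rpow_of_exponent_ge h0 h1.le; push_cast; linarith
    _ = _ := Real.rpow_natCast _ _

lemma gw_summable_norm (h0 : 0 < q) (h1 : q < 1) (r : ℕ) : Summable fun j => ‖gw r q j‖ := by
  have hn : Summable fun j : ℕ => ‖gw r q j‖ := by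
    have hq : ‖q‖ < 1 := by rwa [Real.norm_of_nonneg h0.le]
    have hb := ((summable_pow_mul_geometric_of_norm_lt_one r hq).add
      ((summable_pow_mul_geometric_of_norm_lt_one 0 hq).mul_left ((1/2) ^ r))).mul_left (2 ^ r * 2 ^ (r - 1))
    refine Summable.of_nonneg_of_le (fun n => norm_nonneg _) (fun n => ?_) hb
    unfold gw
    rw [norm_mul, norm_mul, norm_zpow, norm_neg, norm_one, one_zpow, one_mul, Real.norm_of_nonneg (gg_pos h0 _).le,
      norm_pow, Real.norm_of_nonneg (by push_cast; positivity)]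
    have := add_pow_le (show (0:ℝ) ≤ n by positivity) (show (0:ℝ) ≤ 1/2 by norm_num) r
    calc _ ≤ (2 ^ r * (2 ^ (r - 1) * ((n:ℝ) ^ r + (1/2) ^ r))) * q ^ n := by
          rw [mul_pow]
          have := gg_le_nat h0 h1 n
          push_cast
          gcongr
          exact (gg_pos h0 n).le
      _ = _ := by ring
  refine Summable.of_nat_of_neg_add_one hn ?_
  refine hn.congr (fun n => ?_)
  rw [show (-((n : ℤ) + 1)) = -1 - n by ring, gw_neg h0]
  simp

lemma TS_odd (r : ℕ) (hr : Odd r) (h0 : 0 < q) (h1 : q < 1) : TS 1 r 0 q = 0 := by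
  have h := tt_hasSum (ss_abs h11) r 0 h0 h1
  have h2 := (Equiv.hasSum_iff (Equiv.neg ℤ)).mpr h
  have : TS 1 r 0 q = - TS 1 r 0 q := h2.unique (by
    refine hs_congr h.neg (fun n => ?_)
    simp only [Function.comp, Equiv.neg_apply, tt_zero_neg h11, hr.neg_one_pow]; ring)
  linarith

lemma TS_half_zero (h0 : 0 < q) (h1 : q < 1) : TS (-1) 0 (1/2) q = 0 := by
  have h := tt_hasSum (ss_abs hm1) 0 (1/2) h0 h1
  have h2 := (Equiv.hasSum_iff (Equiv.subLeft (-1 : ℤ))).mpr h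
  have : TS (-1) 0 (1/2) q = - TS (-1) 0 (1/2) q := h2.unique (by
    refine hs_congr h.neg (fun n => ?_)
    simp only [Function.comp, Equiv.subLeft_apply, tt_half_neg hm1]; ring)
  linarith

lemma TS_neg_half (r : ℕ) (h0 : 0 < q) (h1 : q < 1) : TS (-1) r (-(1/2)) q = - TS (-1) r (1/2) q := by
  have h := tt_hasSum (ss_abs hm1) r (-(1/2)) h0 h1
  have h2 := (Equiv.hasSum_iff (Equiv.addRight (1 : ℤ))).mpr h
  refine h2.unique (hs_congr (tt_hasSum (ss_abs hm1) r (1/2) h0 h1).neg (fun n => ?_))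
  simp only [Function.comp, Equiv.coe_addRight]
  unfold tt
  rw [zpow_add₀ (by norm_num), zpow_one]
  have : (((n + 1 : ℤ) : ℝ) + -(1/2)) = n + 1/2 := by push_cast; ring
  rw [this]; ring

noncomputable def UU (q : ℝ) (k : ℤ) : ℝ := ∑' n : ℤ, tt (-1) 0 (-(1/2)) q n * hh q (k - n)

lemma UU_hasSum (h0 : 0 < q) (h1 : q < 1) (k : ℤ) :
    HasSum (fun n : ℤ => tt (-1) 0 (-(1/2)) q n * hh q (k - n)) (UU q k) := by
  refine Summable.hasSum ?_
  refine Summable.of_norm_bounded (tt_summable_norm (ss_abs hm1) 0 (-(1/2)) h0 h1) (fun n => ?_)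
  rw [norm_mul, Real.norm_of_nonneg (hh_pos h0 _).le]
  exact mul_le_of_le_one_right (norm_nonneg _) (hh_le h0 _)

lemma UU_rec (h0 : 0 < q) (h1 : q < 1) (k : ℤ) : UU q (k + 1) = q ^ (2 * (k : ℝ) + 1) * UU q k := by
  have s1 := (Equiv.hasSum_iff (Equiv.addRight (1 : ℤ))).mpr (UU_hasSum h0 h1 (k + 1))
  have s2 := (UU_hasSum h0 h1 k).mul_left (q ^ (2 * (k : ℝ) + 1))
  have s3 := (tt_hasSum (ss_abs hm1) 0 (1/2) h0 h1).neg
  rw [TS_half_zero h0 h1] at s3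
  have := (s1.sub s2).unique (hs_congr s3 (fun n => ?_))
  · linarith
  · simp only [Function.comp, Equiv.coe_addRight]
    have e0 : k + 1 - (n + 1) = k - n := by ring
    have hm := hh_mul h0 (k - n)
    rw [e0]
    unfold tt
    rw [zpow_add₀ (by norm_num), zpow_one]
    have e1 : (((n + 1 : ℤ) : ℝ) + -(1/2)) = n + 1/2 := by push_cast; ring
    have e2 : q ^ (2 * (k : ℝ) + 1) * q ^ (((n : ℝ) + -(1/2)) ^ 2) =
        q ^ (((n : ℝ) + 1/2) ^ 2) * q ^ (2 * ((k - n : ℤ) : ℝ) + 1) := by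
      rw [← Real.rpow_add h0, ← Real.rpow_add h0]; congr 1; push_cast; ring
    rw [e1]
    linear_combination (-(-1) ^ n * hh q (k - n)) * e2 - ((-1) ^ n * q ^ (((n : ℝ) + 1/2) ^ 2)) * hm

lemma UU_eq (h0 : 0 < q) (h1 : q < 1) (k : ℤ) : UU q k = UU q 0 * q ^ ((k : ℝ) ^ 2) := by
  induction k using Int.induction_on with
  | zero => simp
  | succ i ih =>
    rw [UU_rec h0 h1, ih, mul_left_comm, ← Real.rpow_add h0]; congr 2; push_cast; ring
  | pred i ih =>
    have := UU_rec h0 h1 (-(i : ℤ) - 1)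
    rw [sub_add_cancel, ih] at this
    have hp : 0 < q ^ (2 * ((-(i : ℤ) - 1 : ℤ) : ℝ) + 1) := Real.rpow_pos_of_pos h0 _
    apply mul_left_cancel₀ hp.ne'
    rw [← this, mul_left_comm, ← Real.rpow_add h0]; congr 2; push_cast; ring

lemma hh_lim_top (h0 : 0 < q) (h1 : q < 1) : Tendsto (fun n : ℕ => hh q n) atTop (𝓝 1) := by
  have : Tendsto (fun n : ℕ => q * (q ^ 2) ^ n) atTop (𝓝 (q * 0)) :=
    (tendsto_pow_atTop_nhds_zero_of_lt_one (by positivity) (sq_lt h0 h1)).const_mul q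
  have h2 := (this.const_add 1).inv₀ (by norm_num)
  norm_num at h2
  refine h2.congr (fun n => ?_)
  unfold hh
  congr 2
  rw [← Real.rpow_natCast, ← Real.rpow_natCast, ← Real.rpow_mul h0.le]
  nth_rw 1 [← Real.rpow_one q]
  rw [← Real.rpow_add h0]; congr 1; push_cast; ring

lemma hh_neg (h0 : 0 < q) (j : ℤ) : hh q (-1 - j) = 1 - hh q j := by
  unfold hh
  have e2 : q ^ (2 * ((-1 - j : ℤ) : ℝ) + 1) = (q ^ (2 * (j : ℝ) + 1))⁻¹ := by
    rw [← Real.rpow_neg h0.le]; congr 1; push_cast; ring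
  rw [e2]
  have : 0 < q ^ (2 * (j : ℝ) + 1) := Real.rpow_pos_of_pos h0 _
  field_simp; ring

lemma hh_mono (h0 : 0 < q) (h1 : q < 1) {i j : ℤ} (hij : i ≤ j) : hh q i ≤ hh q j := by
  unfold hh
  have : (i : ℝ) ≤ j := by exact_mod_cast hij
  have : 0 < q ^ (2 * (j : ℝ) + 1) := Real.rpow_pos_of_pos h0 _
  have : q ^ (2 * (j : ℝ) + 1) ≤ q ^ (2 * (i : ℝ) + 1) :=
    Real.rpow_le_rpow_of_exponent_ge h0 h1.le (by linarith)
  gcongr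

lemma tele_nat (h0 : 0 < q) (h1 : q < 1) : HasSum (fun n : ℕ => hh q (n + 1) - hh q n) (1 - hh q 0) := by
  rw [hasSum_iff_tendsto_nat_of_nonneg (fun n => sub_nonneg.mpr (hh_mono h0 h1 (by omega)))]
  have := (hh_lim_top h0 h1).sub_const (hh q 0)
  refine this.congr (fun n => ?_)
  have := Finset.sum_range_sub (fun n : ℕ => hh q n) n
  push_cast at this
  exact this.symm

lemma tele_int (h0 : 0 < q) (h1 : q < 1) : HasSum (fun k : ℤ => hh q (k + 1) - hh q k) 1 := by
  have a := tele_nat h0 h1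
  have hz := hh_neg h0 0
  have b : HasSum (fun n : ℕ => hh q (-((n : ℤ) + 1) + 1) - hh q (-((n : ℤ) + 1))) (hh q 0) := by
    rw [hasSum_iff_tendsto_nat_of_nonneg (fun n => sub_nonneg.mpr (hh_mono h0 h1 (by omega)))]
    have l : Tendsto (fun n : ℕ => hh q (-(n : ℤ))) atTop (𝓝 0) := by
      rw [← tendsto_add_atTop_iff_nat 1]
      have := (hh_lim_top h0 h1).const_sub 1
      rw [sub_self] at this
      refine this.congr (fun n => ?_)
      rw [← hh_neg h0]; congr 1; push_cast; ring
    have l2 := l.const_sub (hh q 0)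
    rw [sub_zero] at l2
    refine l2.congr (fun n => ?_)
    have := Finset.sum_range_sub' (fun n : ℕ => hh q (-(n : ℤ))) n
    simp only [Nat.cast_zero, neg_zero] at this
    rw [← this]
    refine Finset.sum_congr rfl (fun k _ => ?_)
    push_cast
    congr 2; ring
  convert HasSum.of_nat_of_neg_add_one (f := fun k : ℤ => hh q (k + 1) - hh q k) a b using 1
  ring

lemma VV_sum (h0 : 0 < q) (h1 : q < 1) (n : ℤ) : HasSum (fun k : ℤ => hh q (k - n) - hh q k) (-n) := by
  have base : ∀ m : ℤ, HasSum (fun k : ℤ => hh q (k - m) - hh q (k - (m + 1))) 1 := by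
    intro m
    refine hs_congr ((Equiv.hasSum_iff (Equiv.subRight (m + 1))).mpr (tele_int h0 h1)) (fun k => ?_)
    simp only [Function.comp, Equiv.subRight_apply]
    congr 2; ring
  induction n using Int.induction_on with
  | zero => simpa using hasSum_zero
  | succ i ih =>
    have := hs_congr (f := fun k : ℤ => hh q (k - ((i : ℤ) + 1)) - hh q k) (ih.sub (base i)) (fun k => by ring)
    convert this using 1; push_cast; ring
  | pred i ih =>
    have b := base (-(i : ℤ) - 1)
    rw [sub_add_cancel] at b
    have := hs_congr (f := fun k : ℤ => hh q (k - (-(i : ℤ) - 1)) - hh q k) (ih.add b) (fun k => by ring)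
    convert this using 1; push_cast; ring

lemma VV_abs (h0 : 0 < q) (h1 : q < 1) (n : ℤ) : HasSum (fun k : ℤ => ‖hh q (k - n) - hh q k‖) |(n : ℝ)| := by
  have h := VV_sum h0 h1 n
  rcases le_total 0 n with hn | hn
  · rw [abs_of_nonneg (by exact_mod_cast hn)]
    have h' := h.neg
    rw [neg_neg] at h'
    refine hs_congr h' (fun k => ?_)
    rw [Real.norm_of_nonpos (sub_nonpos.mpr (hh_mono h0 h1 (by omega)))]
  · rw [abs_of_nonpos (by exact_mod_cast hn)]
    refine hs_congr h (fun k => ?_)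
    rw [Real.norm_of_nonneg (sub_nonneg.mpr (hh_mono h0 h1 (by omega)))]

lemma c_val (h0 : 0 < q) (h1 : q < 1) : UU q 0 * TS 1 0 0 q = TS (-1) 1 (1/2) q / 2 := by
  set p := tt (-1) 0 (-(1/2)) q with hp
  have hpn : HasSum (fun n : ℤ => p n * (-n)) (TS (-1) 1 (1/2) q / 2) := by
    have a := tt_hasSum (ss_abs hm1) 1 (-(1/2)) h0 h1
    have b := tt_hasSum (ss_abs hm1) 0 (-(1/2)) h0 h1
    rw [TS_neg_half _ h0 h1] at a b
    rw [TS_half_zero h0 h1] at b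
    have := hs_congr (f := fun n : ℤ => p n * (-n)) ((a.add b).mul_left (-(1/2))) (fun n => by
      rw [tt_pow _ 1, hp]; ring)
    convert this using 1; ring
  have hsum : Summable fun x : ℤ × ℤ => p x.1 * (hh q (x.2 - x.1) - hh q x.2) := by
    apply Summable.of_norm
    rw [summable_prod_of_nonneg (fun x => norm_nonneg _)]
    simp only [norm_mul]
    constructor
    · intro n; exact (VV_abs h0 h1 n).summable.mul_left _
    · have := hpn.summable.norm
      refine this.congr (fun n => ?_)
      rw [tsum_mul_left, (VV_abs h0 h1 n).tsum_eq, norm_mul, norm_neg, Real.norm_eq_abs (n : ℝ)]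
  have r1 := hsum.hasSum.prod_fiberwise (fun n => (VV_sum h0 h1 n).mul_left (p n))
  have e1 := r1.unique hpn
  have s2 := (Equiv.hasSum_iff (Equiv.prodComm ℤ ℤ)).mpr hsum.hasSum
  have r2 := s2.prod_fiberwise (g := fun k => UU q 0 * tt 1 0 0 q k) (fun k => by
    have b := tt_hasSum (ss_abs hm1) 0 (-(1/2)) h0 h1
    rw [TS_neg_half _ h0 h1, TS_half_zero h0 h1] at b
    have := (UU_hasSum h0 h1 k).sub (b.mul_right (hh q k))
    have t : UU q 0 * tt 1 0 0 q k = UU q k - -0 * hh q k := by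
      rw [UU_eq h0 h1 k]; unfold tt; simp
    rw [t]
    refine hs_congr this (fun n => ?_)
    simp only [Function.comp, Equiv.prodComm_apply, Prod.swap]
    ring)
  have e2 := r2.unique ((tt_hasSum (ss_abs h11) 0 0 h0 h1).mul_left (UU q 0))
  rw [← e2, e1]

lemma weighted (h0 : 0 < q) (h1 : q < 1) (r : ℕ) {X : ℝ}
    (hX : HasSum (fun x : ℤ × ℤ => tt 1 0 0 q x.1 * gw 0 q x.2 * (2 * ((x.2 : ℝ) + 1/2) + 2 * ((x.1 : ℝ) + 0)) ^ r) X) :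
    X = UU q 0 * TS (-1) r (1/2) q := by
  let eqv : ℤ × ℤ ≃ ℤ × ℤ :=
    { toFun := fun x => (x.2, x.1 - x.2), invFun := fun y => (y.1 + y.2, y.1),
      left_inv := fun x => by simp, right_inv := fun y => by simp }
  have s2 := (Equiv.hasSum_iff eqv).mpr hX
  have r2 := s2.prod_fiberwise (g := fun k => UU q 0 * tt (-1) r (1/2) q k) (fun k => by
    have := (UU_hasSum h0 h1 k).mul_left ((-1) ^ k * (2 * ((k : ℝ) + 1/2)) ^ r * q ^ ((k : ℝ) + 1/4))
    have t : UU q 0 * tt (-1) r (1/2) q k = (-1) ^ k * (2 * ((k : ℝ) + 1/2)) ^ r * q ^ ((k : ℝ) + 1/4) * UU q k := by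
      rw [UU_eq h0 h1 k]; unfold tt
      have : q ^ (((k : ℝ) + 1/2) ^ 2) = q ^ ((k : ℝ) + 1/4) * q ^ ((k : ℝ) ^ 2) := by
        rw [← Real.rpow_add h0]; congr 1; ring
      rw [this]; ring
    rw [t]
    refine hs_congr this (fun n => ?_)
    simp only [Function.comp, eqv, Equiv.coe_fn_mk]
    unfold gw gg tt
    have e1 : (2 * (((k - n : ℤ) : ℝ) + 1/2) + 2 * ((n : ℝ) + 0)) = 2 * ((k : ℝ) + 1/2) := by push_cast; ring
    have e2 : q ^ (((n : ℝ) + 0) ^ 2) * q ^ (((k - n : ℤ) : ℝ) + 1/2) = q ^ ((k : ℝ) + 1/4) * q ^ (((n : ℝ) + -(1/2)) ^ 2) := by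
      rw [← Real.rpow_add h0, ← Real.rpow_add h0]; congr 1; push_cast; ring
    rw [e1, ss_sub hm1, one_zpow]
    linear_combination ((-1) ^ k * (-1) ^ n * (2 * ((k : ℝ) + 1/2)) ^ r * hh q (k - n)) * e2)
  exact r2.unique ((tt_hasSum (ss_abs hm1) r (1/2) h0 h1).mul_left (UU q 0))

noncomputable def GS (r : ℕ) (q : ℝ) : ℝ := ∑' j : ℤ, gw r q j

lemma gw_prod (h0 : 0 < q) (h1 : q < 1) (r s : ℕ) :
    HasSum (fun x : ℤ × ℤ => tt 1 r 0 q x.1 * gw s q x.2) (TS 1 r 0 q * GS s q) := by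
  unfold TS GS
  have a := tt_summable_norm (ss_abs h11) r 0 h0 h1
  have b := gw_summable_norm h0 h1 s
  rw [tsum_mul_tsum_of_summable_norm a b]
  exact (summable_mul_of_summable_norm a b).hasSum

lemma gw_pow (r : ℕ) (j : ℤ) : gw r q j = (2 * ((j : ℝ) + 1/2)) ^ r * gw 0 q j := by unfold gw; ring

lemma w1 (h0 : 0 < q) (h1 : q < 1) : TS 1 0 0 q * GS 1 q = UU q 0 * TS (-1) 1 (1/2) q := by
  have a := (gw_prod h0 h1 0 1).add (gw_prod h0 h1 1 0)
  rw [TS_odd 1 (by decide) h0 h1, zero_mul, add_zero] at a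
  refine weighted h0 h1 1 (hs_congr a (fun x => ?_))
  rw [gw_pow 1, tt_pow 1 1]; ring

lemma w3 (h0 : 0 < q) (h1 : q < 1) : TS 1 0 0 q * GS 3 q + 3 * (TS 1 2 0 q * GS 1 q) = UU q 0 * TS (-1) 3 (1/2) q := by
  have a := ((gw_prod h0 h1 0 3).add ((gw_prod h0 h1 2 1).mul_left 3)).add
    (((gw_prod h0 h1 1 2).mul_left 3).add (gw_prod h0 h1 3 0))
  rw [TS_odd 1 (by decide) h0 h1, TS_odd 3 (by decide) h0 h1, zero_mul, zero_mul, mul_zero, add_zero, add_zero] at a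
  refine weighted h0 h1 3 (hs_congr a (fun x => ?_))
  rw [gw_pow 1, gw_pow 2, gw_pow 3, tt_pow 1 1, tt_pow 1 2, tt_pow 1 3]; ring

lemma G3_eq (h0 : 0 < q) (h1 : q < 1) :
    GS 3 q = 1/2 * TS 1 0 (1/2) q ^ 2 * TS (-1) 0 0 q ^ 2 * (TS (-1) 0 0 q ^ 4 - TS 1 0 (1/2) q ^ 4) := by
  have a := w1 h0 h1
  have b := w3 h0 h1
  have c := c_val h0 h1
  have d := logder h0 h1
  have J := jacobi h0 h1
  have n3 := (TS_pos h0 h1 0).ne'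
  apply mul_left_cancel₀ (pow_ne_zero 3 n3)
  linear_combination TS 1 0 0 q ^ 2 * b - 3 * TS 1 0 0 q * TS 1 2 0 q * a +
    (TS 1 0 0 q * TS (-1) 3 (1/2) q - 3 * TS 1 2 0 q * TS (-1) 1 (1/2) q) * c +
    TS (-1) 1 (1/2) q / 2 * d + 1/2 * TS 1 0 0 q * (TS (-1) 0 0 q ^ 4 - TS 1 0 (1/2) q ^ 4) *
    (TS (-1) 1 (1/2) q + TS 1 0 (1/2) q * TS 1 0 0 q * TS (-1) 0 0 q) * J
end

lemma div_bij (x : ℕ × ℕ) : 2 * x.1 + 1 ∈ (2 * (2 * x.1 * x.2 + x.1 + x.2) + 1).divisors := by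
  rw [Nat.mem_divisors]
  exact ⟨⟨2 * x.2 + 1, by ring⟩, by omega⟩

lemma odd_div {n d : ℕ} (hd : d ∈ (2 * n + 1).divisors) :
    d = 2 * (d / 2) + 1 ∧ (2 * n + 1) / d = 2 * ((2 * n + 1) / d / 2) + 1 ∧ d * ((2 * n + 1) / d) = 2 * n + 1 := by
  have h := Nat.mul_div_cancel' (Nat.dvd_of_mem_divisors hd)
  have ho : Odd (d * ((2 * n + 1) / d)) := by rw [h]; exact odd_two_mul_add_one n
  rw [Nat.odd_mul] at ho
  obtain ⟨⟨a, ha⟩, ⟨b, hb⟩⟩ := ho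
  exact ⟨by omega, by omega, h⟩

lemma sigma_ext' {n m d e : ℕ} (hd : d ∈ (2 * n + 1).divisors) (he : e ∈ (2 * m + 1).divisors)
    (h1 : n = m) (h2 : d = e) :
    (⟨n, ⟨d, hd⟩⟩ : Σ n : ℕ, {d // d ∈ (2 * n + 1).divisors}) = ⟨m, ⟨e, he⟩⟩ := by
  subst h1; subst h2; rfl

def divEquiv : (Σ n : ℕ, {d // d ∈ (2 * n + 1).divisors}) ≃ ℕ × ℕ where
  toFun := fun x => (x.2.1 / 2, (2 * x.1 + 1) / x.2.1 / 2)
  invFun := fun x => ⟨2 * x.1 * x.2 + x.1 + x.2, ⟨2 * x.1 + 1, div_bij x⟩⟩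
  left_inv := by
    rintro ⟨n, d, hd⟩
    obtain ⟨e1, e2, e3⟩ := odd_div hd
    refine sigma_ext' _ _ ?_ e1.symm
    dsimp only
    generalize hb : (2 * n + 1) / d / 2 = b at *
    generalize ha : d / 2 = a at *
    rw [e2, e1] at e3
    nlinarith
  right_inv := by
    rintro ⟨a, b⟩
    have : (2 * (2 * a * b + a + b) + 1) / (2 * a + 1) = 2 * b + 1 := by
      apply Nat.div_eq_of_eq_mul_right (by omega); ring
    simp only [this, Prod.mk.injEq]
    omega

lemma sig_sum {q : ℝ} (h0 : 0 < q) (h1 : q < 1) :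
    Real.sqrt q * ∑' n : ℕ, (sigma3 (2 * n + 1) : ℝ) * (-q) ^ n = GS 3 q / 2 := by
  -- half of GS
  have hg := gw_summable_norm h0 h1 3
  have hn : Summable fun j : ℕ => gw 3 q j := hg.of_norm.comp_injective Nat.cast_injective
  have hG : GS 3 q / 2 = ∑' j : ℕ, gw 3 q j := by
    have : HasSum (gw 3 q) (∑' j : ℕ, gw 3 q j + ∑' j : ℕ, gw 3 q j) := by
      refine HasSum.of_nat_of_neg_add_one hn.hasSum (hs_congr hn.hasSum (fun n => ?_))
      rw [show (-((n : ℤ) + 1)) = -1 - n by ring, gw_neg h0]; ring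
    unfold GS; rw [this.tsum_eq]; ring
  -- double sum
  set W : ℕ × ℕ → ℝ := fun x => (2 * (x.1 : ℝ) + 1) ^ 3 * ((-1) ^ x.1 * (-1) ^ x.2) *
    (Real.sqrt q * q ^ (2 * x.1 * x.2 + x.1 + x.2)) with hW
  have hfib : ∀ j : ℕ, HasSum (fun l : ℕ => ‖W (j, l)‖)
      ((2 * (j : ℝ) + 1) ^ 3 * Real.sqrt q * q ^ j * (1 - q ^ (2 * j + 1))⁻¹) := by
    intro j
    have := (hasSum_geometric_of_lt_one (r := q ^ (2 * j + 1)) (by positivity) (pow_lt_one₀ h0.le h1 (by omega))).mul_left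
      ((2 * (j : ℝ) + 1) ^ 3 * Real.sqrt q * q ^ j)
    refine hs_congr this (fun l => ?_)
    simp only [hW, norm_mul, norm_pow, norm_neg, norm_one, one_pow, mul_one, Real.norm_of_nonneg (Real.sqrt_nonneg q),
      Real.norm_of_nonneg h0.le, Real.norm_of_nonneg (show (0:ℝ) ≤ 2 * (j : ℝ) + 1 by positivity)]
    ring
  have hgwe : ∀ j : ℕ, gw 3 q j = ((2 * (j : ℝ) + 1) ^ 3 * (-1) ^ j * (Real.sqrt q * q ^ j)) * (1 - -q ^ (2 * j + 1))⁻¹ := by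
    intro j
    unfold gw gg hh
    have e1 : q ^ (((j : ℤ) : ℝ) + 1/2) = Real.sqrt q * q ^ j := by
      rw [Real.rpow_add h0, Real.sqrt_eq_rpow, mul_comm]; congr 1
      push_cast; rw [Real.rpow_natCast]
    have e2 : q ^ (2 * ((j : ℤ) : ℝ) + 1) = q ^ (2 * j + 1) := by
      rw [← Real.rpow_natCast]; congr 1; push_cast; ring
    rw [e1, e2, zpow_natCast, sub_neg_eq_add]; push_cast; ring
  have hfib2 : ∀ j : ℕ, HasSum (fun l : ℕ => W (j, l)) (gw 3 q j) := by
    intro j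
    have := (hasSum_geometric_of_abs_lt_one (r := -q ^ (2 * j + 1)) (by
      rw [abs_neg, abs_of_nonneg (by positivity)]; exact pow_lt_one₀ h0.le h1 (by omega))).mul_left
      ((2 * (j : ℝ) + 1) ^ 3 * (-1) ^ j * (Real.sqrt q * q ^ j))
    rw [hgwe j]
    refine hs_congr this (fun l => ?_)
    simp only [hW]
    rw [neg_pow]; ring
  have hWs : Summable W := by
    apply Summable.of_norm
    rw [summable_prod_of_nonneg (fun x => norm_nonneg _)]
    refine ⟨fun j => (hfib j).summable, ?_⟩
    have hb := hg.comp_injective (Nat.cast_injective (R := ℤ))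
    refine Summable.of_nonneg_of_le (fun n => tsum_nonneg fun _ => norm_nonneg _) (fun j => ?_) (hb.mul_left (2 / (1 - q)))
    rw [(hfib j).tsum_eq]
    have hx0 : (0:ℝ) < q ^ (2 * j + 1) := by positivity
    have hx1 : q ^ (2 * j + 1) ≤ q := pow_le_of_le_one h0.le h1.le (by omega)
    simp only [Function.comp]
    rw [hgwe j]
    simp only [norm_mul, norm_pow, norm_neg, norm_one, one_pow, mul_one, norm_inv, Real.norm_of_nonneg (Real.sqrt_nonneg q),
      Real.norm_of_nonneg h0.le, Real.norm_of_nonneg (show (0:ℝ) ≤ 2 * (j : ℝ) + 1 by positivity), sub_neg_eq_add,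
      Real.norm_of_nonneg (show (0:ℝ) ≤ 1 + q ^ (2 * j + 1) by positivity)]
    have k1 : (1 - q ^ (2 * j + 1))⁻¹ ≤ (1 - q)⁻¹ := inv_anti₀ (by linarith) (by linarith)
    have k2 : (2 : ℝ)⁻¹ ≤ (1 + q ^ (2 * j + 1))⁻¹ := inv_anti₀ (by linarith) (by linarith)
    have k3 : 0 < (1 - q)⁻¹ := inv_pos.mpr (by linarith)
    have k4 : (1 - q ^ (2 * j + 1))⁻¹ ≤ 2 * (1 - q)⁻¹ * (1 + q ^ (2 * j + 1))⁻¹ := by nlinarith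
    calc _ ≤ (2 * (j : ℝ) + 1) ^ 3 * Real.sqrt q * q ^ j * (2 * (1 - q)⁻¹ * (1 + q ^ (2 * j + 1))⁻¹) :=
          mul_le_mul_of_nonneg_left k4 (by positivity)
      _ = _ := by rw [div_eq_mul_inv]; ring
  have r1 := (hWs.hasSum.prod_fiberwise hfib2).tsum_eq
  have s2 := (Equiv.hasSum_iff divEquiv).mpr hWs.hasSum
  have r2 := s2.sigma (g := fun n => Real.sqrt q * ((sigma3 (2 * n + 1) : ℝ) * (-q) ^ n)) (fun n => by
    have e : Real.sqrt q * ((sigma3 (2 * n + 1) : ℝ) * (-q) ^ n) =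
        ∑ d : {d // d ∈ (2 * n + 1).divisors}, (d.1 : ℝ) ^ 3 * (Real.sqrt q * (-q) ^ n) := by
      rw [← Finset.sum_mul]
      unfold sigma3
      rw [Finset.sum_coe_sort (2 * n + 1).divisors (fun d : ℕ => (d : ℝ) ^ 3)]
      push_cast; ring
    rw [e]
    refine hs_congr (hasSum_fintype _) ?_
    rintro ⟨d, hd⟩
    obtain ⟨e1, e2, e3⟩ := odd_div hd
    simp only [Function.comp, divEquiv, Equiv.coe_fn_mk, hW]
    generalize hb : (2 * n + 1) / d / 2 = b at *
    generalize ha : d / 2 = a at *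
    rw [e2] at e3
    have hn : n = 2 * a * b + a + b := by
      rw [e1] at e3; nlinarith
    rw [e1, ← hn, neg_pow q n]
    have : (-1 : ℝ) ^ n = (-1) ^ a * (-1) ^ b := by
      rw [hn, pow_add, pow_add, mul_assoc, pow_mul]; norm_num
    rw [this]; push_cast; ring)
  rw [hG, r1, ← r2.tsum_eq, tsum_mul_left]

lemma theta2_eq (q : ℝ) : theta2 q = TS 1 0 (1/2) q := by
  unfold theta2 TS tt; simp
lemma theta4_eq (q : ℝ) : theta4 q = TS (-1) 0 0 q := by
  unfold theta4 TS tt; simp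

theorem stmt_3 :
    ∀ q ∈ Set.Ioo (0 : ℝ) 1,
      (1 / 4) * theta2 q ^ 2 * theta4 q ^ 2 * (theta4 q ^ 4 - theta2 q ^ 4) =
        Real.sqrt q * ∑' n : ℕ, (sigma3 (2 * n + 1) : ℝ) * (-q) ^ n := by
  intro q hq
  rw [sig_sum hq.1 hq.2, G3_eq hq.1 hq.2, theta2_eq, theta4_eq]
  ring
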